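/- Let k be a field of characteristic zero, R a unital associative k-algebra, and T a binary word of length N with zero-positions T_0 of size m and one-positions T_1 of size n. Fix 0 ≤ k' ≤ m and 0 ≤ l ≤ n and elements α_1, …, α_{k'}, β_1, …, β_l, γ, δ ∈ R, and extend the families by setting α_p = γ for k' < p ≤ m and β_q = δ for l < q ≤ n. Then the sum over all injections f : {1,…,k'} → T_0 and g : {1,…,l} → T_1 of Φ_T^{f,g} equals (1/((m−k')!(n−l)!)) times the sum over all subsets I ⊆ {1,…,m} and J ⊆ {1,…,n} of (−1)^{m−|I|}(−1)^{n−|J|} times the product Γ'_N Γ'_{N−1} ⋯ Γ'_1, where Γ'_i = Σ_{p∈I} α_p if i ∈ T_0 and Γ'_i = Σ_{q∈J} β_q if i ∈ T_1. -/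

import Mathlib

/-!
The product `x_N ⋯ x_1` is multilinear in its factors, hence, with the factors at the positions of
the other digit held fixed, multilinear in those at the positions of one digit. The identity is
therefore a one-family statement about a multilinear map `L` in `m` variables (`alt_sum_eq`),
applied once to the ones and once to the zeros.

The one-family statement has two halves. Expanding `L (∑_{p ∈ I} a_p, …, ∑_{p ∈ I} a_p)` and
exchanging the sums, inclusion–exclusion kills every choice of indices that misses some `p`, so the
signed sum over `I` is the sum of `L (a ∘ σ)` over all bijections `σ` (`polarization`). If `a_p = γ`
for all `p ≥ k'`, such a term depends only on the injection of the first `k'` indices, and every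
injection extends to exactly `(m - k')!` bijections (`card_extensions`).
-/

open Finset

/-- The values `α_{f⁻¹ i}` on the image of `f`, and `γ` elsewhere: the one-digit version of
`gammaFn`. -/
noncomputable def extendBy {ι R : Type*} {a : ℕ} (f : Fin a ↪ ι) (α : Fin a → R) (γ : R) (i : ι) :
    R :=
  open Classical in if h : ∃ p, f p = i then α h.choose else γ

/-- Inclusion–exclusion: the signed sum over the sets containing `S` vanishes unless `S` is
everything. -/
lemma sum_neg_one_pow_superset {m : ℕ} (S : Finset (Fin m)) :
    (∑ I : Finset (Fin m), if S ⊆ I then (-1 : ℤ) ^ (m - #I) else 0)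
      = if S = univ then 1 else 0 := by
  have h := sum_powerset_neg_one_pow_card (x := Sᶜ)
  simp only [compl_eq_empty_iff] at h
  rw [← h, ← sum_filter]
  refine sum_bij' (fun I _ => Iᶜ) (fun I _ => Iᶜ) ?_ ?_ ?_ ?_ ?_
  · intro I hI
    simpa using hI
  · intro I hI
    simpa [subset_compl_comm] using hI
  · simp
  · simp
  · intro I _
    simp [card_compl]

lemma polarization {ι R : Type*} [Fintype ι] [DecidableEq ι] [Ring R] {m : ℕ}
    (hm : Fintype.card ι = m) (L : MultilinearMap ℤ (fun _ : ι => R) R) (a : Fin m → R) :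
    ∑ I : Finset (Fin m), (-1 : ℤ) ^ (m - #I) • L (fun _ => ∑ p ∈ I, a p)
      = ∑ τ : Fin m ≃ ι, L (fun i => a (τ.symm i)) := by
  classical
  have expand : ∀ I : Finset (Fin m),
      (-1 : ℤ) ^ (m - #I) • L (fun _ => ∑ p ∈ I, a p)
        = ∑ r : ι → Fin m, (if univ.image r ⊆ I then (-1 : ℤ) ^ (m - #I) else 0) •
            L (fun i => a (r i)) := by
    intro I
    rw [L.map_sum_finset (fun _ p => a p) (fun _ => I), smul_sum]
    simp only [ite_smul, zero_smul]
    rw [← sum_filter]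
    refine sum_congr ?_ fun _ _ => rfl
    ext r
    simp [Fintype.mem_piFinset, image_subset_iff]
  rw [sum_congr rfl fun I _ => expand I, sum_comm]
  simp only [← sum_smul, sum_neg_one_pow_superset]
  simp only [ite_smul, one_smul, zero_smul]
  rw [← sum_filter]
  symm
  refine sum_bij (fun τ _ => ⇑τ.symm) ?_ ?_ ?_ ?_
  · intro τ _
    simp [image_univ_of_surjective τ.symm.surjective]
  · intro τ _ τ' _ h
    exact Equiv.symm_bijective.1 (DFunLike.coe_injective h)
  · intro r hr
    have hs : Function.Surjective r := by
      intro p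
      have : p ∈ univ.image r := by rw [(mem_filter.1 hr).2]; exact mem_univ p
      simpa using this
    have hb : Function.Bijective r :=
      (Fintype.bijective_iff_surjective_and_card r).2 ⟨hs, by simp [hm]⟩
    exact ⟨(Equiv.ofBijective r hb).symm, mem_univ _, rfl⟩
  · intro τ _
    rfl

lemma card_extensions {ι : Type*} [Fintype ι] [DecidableEq ι] {m a : ℕ}
    (hm : Fintype.card ι = m) (ha : a ≤ m) (f : Fin a ↪ ι) :
    open Classical in
    #{τ : Fin m ≃ ι | (Fin.castLEEmb ha).trans τ.toEmbedding = f} = (m - a).factorial := by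
  classical
  let s : Set (Fin m) := Set.range (Fin.castLE ha)
  let e₀ : s ≃ Set.range f :=
    (Equiv.ofInjective _ (Fin.castLE_injective ha)).symm.trans (Equiv.ofInjective f f.injective)
  have he : ∀ p, (e₀ ⟨Fin.castLE ha p, p, rfl⟩ : ι) = f p := by
    intro p
    have : (Equiv.ofInjective _ (Fin.castLE_injective ha)).symm ⟨Fin.castLE ha p, p, rfl⟩ = p := by
      rw [Equiv.symm_apply_eq]; rfl
    simp only [e₀, Equiv.trans_apply]
    erw [this]
    rfl
  have hs : Fintype.card s = a := by
    rw [Set.card_range_of_injective (Fin.castLE_injective ha), Fintype.card_fin]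
  have ht : Fintype.card (Set.range f) = a := by
    rw [Set.card_range_of_injective f.injective, Fintype.card_fin]
  have hs' : Fintype.card (sᶜ : Set (Fin m)) = m - a := by
    rw [Fintype.card_compl_set, hs, Fintype.card_fin]
  have ht' : Fintype.card ((Set.range f)ᶜ : Set ι) = m - a := by
    rw [Fintype.card_compl_set, ht, hm]
  rw [← hs', ← Fintype.card_equiv (Fintype.equivOfCardEq (hs'.trans ht'.symm)),
    ← Fintype.card_congr (Equiv.Set.compl e₀), Fintype.card_subtype]
  congr 1
  ext τ
  simp only [mem_filter, mem_univ, true_and]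
  constructor
  · rintro h ⟨_, p, rfl⟩
    rw [he, ← h]
    rfl
  · intro h
    ext p
    rw [← he]
    exact h ⟨Fin.castLE ha p, p, rfl⟩

lemma extendBy_castLE {ι R : Type*} {m a : ℕ} (ha : a ≤ m) (τ : Fin m ≃ ι)
    (α : Fin a → R) (γ : R) (i : ι) :
    (if h : (τ.symm i : ℕ) < a then α ⟨τ.symm i, h⟩ else γ)
      = extendBy ((Fin.castLEEmb ha).trans τ.toEmbedding) α γ i := by
  classical
  unfold extendBy
  have key : ∀ p : Fin a, ((Fin.castLEEmb ha).trans τ.toEmbedding) p = i ↔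
      (p : ℕ) = τ.symm i := by
    intro p
    have h : Fin.castLE ha p = τ.symm i ↔ (p : ℕ) = τ.symm i := Fin.ext_iff
    rw [← h, Equiv.eq_symm_apply]
    rfl
  by_cases h : (τ.symm i : ℕ) < a
  · have hex : ∃ p, ((Fin.castLEEmb ha).trans τ.toEmbedding) p = i := ⟨⟨_, h⟩, (key _).2 rfl⟩
    rw [dif_pos h, dif_pos hex]
    congr 1
    exact Fin.ext ((key _).1 hex.choose_spec).symm
  · rw [dif_neg h, dif_neg]
    rintro ⟨p, hp⟩
    exact h ((key p).1 hp ▸ p.2)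

lemma alt_sum_eq {ι R : Type*} [Fintype ι] [DecidableEq ι] [Ring R] {m a : ℕ}
    (hm : Fintype.card ι = m) (ha : a ≤ m) (L : MultilinearMap ℤ (fun _ : ι => R) R)
    (α : Fin a → R) (γ : R) :
    ∑ I : Finset (Fin m), (-1 : R) ^ (m - #I) *
        L (fun _ => ∑ p ∈ I, if h : (p : ℕ) < a then α ⟨p, h⟩ else γ)
      = (m - a).factorial • ∑ f : Fin a ↪ ι, L (extendBy f α γ) := by
  classical
  have h := polarization hm L (fun p => if h : (p : ℕ) < a then α ⟨p, h⟩ else γ)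
  simp only [zsmul_eq_mul, Int.cast_pow, Int.cast_neg, Int.cast_one, extendBy_castLE ha] at h
  rw [h, ← sum_fiberwise univ (fun τ : Fin m ≃ ι => (Fin.castLEEmb ha).trans τ.toEmbedding),
    smul_sum]
  refine sum_congr (by congr!) fun f _ => ?_
  rw [← card_extensions hm ha f, ← sum_const]
  refine sum_congr (by congr!) fun τ hτ => ?_
  rw [← (mem_filter.1 hτ).2]

/-- The reversed product `x_N ⋯ x_1` as a multilinear map. -/
noncomputable def revProd (R : Type*) [Ring R] (N : ℕ) : MultilinearMap ℤ (fun _ : Fin N => R) R :=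
  (MultilinearMap.mkPiAlgebraFin ℤ N R).domDomCongr Fin.revPerm

lemma revProd_apply {R : Type*} [Ring R] {N : ℕ} (v : Fin N → R) :
    revProd R N v = ((List.ofFn v).reverse).prod := by
  have : (List.ofFn v).reverse = List.ofFn (fun i => v (Fin.rev i)) := by
    apply List.ext_getElem
    · simp
    · intro i h1 h2
      simp only [List.getElem_reverse, List.getElem_ofFn, List.length_ofFn]
      congr 1
      ext
      simp only [Fin.val_rev]
      omega
  rw [this]
  rfl

/-- `Γᵢ^{f,g}`: for a position `i` of the binary word `t`, the element `α_{f⁻¹ i}` if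
`i ∈ Im f`, `β_{g⁻¹ i}` if `i ∈ Im g`, `γ` if `i ∈ T₀ ∖ Im f` and `δ` if `i ∈ T₁ ∖ Im g`. -/
noncomputable def gammaFn {R : Type*} [Ring R] {N a b : ℕ} (t : Fin N → Bool)
    (f : Fin a ↪ {i : Fin N // t i = false}) (g : Fin b ↪ {i : Fin N // t i = true})
    (α : Fin a → R) (β : Fin b → R) (γ δ : R) (i : Fin N) : R :=
  if h0 : t i = false then
    if h : ∃ p, f p = ⟨i, h0⟩ then α h.choose else γ
  else
    if h : ∃ q, g q = ⟨i, by simpa using h0⟩ then β h.choose else δ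

/-- `Φ_T^{f,g} = Γ_N^{f,g} Γ_{N−1}^{f,g} ⋯ Γ_1^{f,g}`. -/
noncomputable def phiFn {R : Type*} [Ring R] {N a b : ℕ} (t : Fin N → Bool)
    (f : Fin a ↪ {i : Fin N // t i = false}) (g : Fin b ↪ {i : Fin N // t i = true})
    (α : Fin a → R) (β : Fin b → R) (γ δ : R) : R :=
  ((List.ofFn (gammaFn t f g α β γ δ)).reverse).prod

/-- For a binary word with `m` zeros and `n` ones, `0 ≤ k' ≤ m`, `0 ≤ l ≤ n`, and elements
`α₁,…,α_{k'}, β₁,…,β_l, γ, δ` of a `k`-algebra `R` (char `k` = 0), extending the families by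
`γ` resp. `δ`, the sum over all injections `f : [k'] ↪ T₀`, `g : [l] ↪ T₁` of `Φ_T^{f,g}`
equals `1/((m−k')!(n−l)!)` times the inclusion–exclusion sum over subsets `I ⊆ [m]`,
`J ⊆ [n]`. -/
theorem bint_eval_ket_expansion (k : Type*) [Field k] [CharZero k]
    (R : Type*) [Ring R] [Algebra k R]
    (N m n k' l : ℕ) (t : Fin N → Bool)
    (hm : (Finset.univ.filter fun i : Fin N => t i = false).card = m)
    (hn : (Finset.univ.filter fun i : Fin N => t i = true).card = n)
    (hk : k' ≤ m) (hl : l ≤ n)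
    (α : Fin k' → R) (β : Fin l → R) (γ δ : R) :
    ∑ f : Fin k' ↪ {i : Fin N // t i = false}, ∑ g : Fin l ↪ {i : Fin N // t i = true},
      phiFn t f g α β γ δ
    = (((m - k').factorial * (n - l).factorial : ℕ) : k)⁻¹ •
        ∑ I : Finset (Fin m), ∑ J : Finset (Fin n),
          (-1 : R) ^ (m - I.card) * (-1 : R) ^ (n - J.card) *
            ((List.ofFn fun i : Fin N =>
              if t i = false then
                ∑ p ∈ I, (if h : (p : ℕ) < k' then α ⟨p, h⟩ else γ)
              else
                ∑ q ∈ J, (if h : (q : ℕ) < l then β ⟨q, h⟩ else δ)).reverse).prod := by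
  classical
  have hm' : Fintype.card {i : Fin N // t i = false} = m := by rw [Fintype.card_subtype, hm]
  have hn' : Fintype.card {i : Fin N // t i = true} = n := by rw [Fintype.card_subtype, hn]
  -- `P x y` is the product with factors `x` at the zeros and `y` at the ones.
  let P : ({i : Fin N // t i = false} → R) → ({i : Fin N // t i = true} → R) → R := fun x y =>
    revProd R N fun i => if h : t i = false then x ⟨i, h⟩ else y ⟨i, by simpa using h⟩
  have zeros : ∀ y, ∑ I : Finset (Fin m), (-1 : R) ^ (m - #I) *
        P (fun _ => ∑ p ∈ I, if h : (p : ℕ) < k' then α ⟨p, h⟩ else γ) y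
      = (m - k').factorial • ∑ f : Fin k' ↪ {i : Fin N // t i = false}, P (extendBy f α γ) y :=
    fun y => alt_sum_eq hm' hk ((revProd R N).domDomRestrict (fun i => t i = false)
      fun i => y ⟨i, by simpa using i.2⟩) α γ
  have ones : ∀ x, ∑ J : Finset (Fin n), (-1 : R) ^ (n - #J) *
        P x (fun _ => ∑ q ∈ J, if h : (q : ℕ) < l then β ⟨q, h⟩ else δ)
      = (n - l).factorial • ∑ g : Fin l ↪ {i : Fin N // t i = true}, P x (extendBy g β δ) := by
    intro x
    have hP : ∀ y, P x y = (revProd R N).domDomRestrict (fun i => t i = true)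
        (fun i => x ⟨i, by simpa using i.2⟩) y := by
      intro y
      rw [MultilinearMap.domDomRestrict_apply]
      refine congrArg (revProd R N) (funext fun i => ?_)
      by_cases h : t i = false
      · simp [h]
      · have h' : t i = true := by simpa using h
        simp [h']
    simp only [hP]
    exact alt_sum_eq hn' hl _ β δ
  have lhs : ∀ f g, phiFn t f g α β γ δ = P (extendBy f α γ) (extendBy g β δ) := by
    intro f g
    simp only [P, revProd_apply, phiFn]
    congr 3
    funext i
    unfold gammaFn extendBy
    split_ifs <;> rfl
  have rhs : ∀ (I : Finset (Fin m)) (J : Finset (Fin n)),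
      ((List.ofFn fun i : Fin N =>
        if t i = false then ∑ p ∈ I, (if h : (p : ℕ) < k' then α ⟨p, h⟩ else γ)
        else ∑ q ∈ J, (if h : (q : ℕ) < l then β ⟨q, h⟩ else δ)).reverse).prod
      = P (fun _ => ∑ p ∈ I, if h : (p : ℕ) < k' then α ⟨p, h⟩ else γ)
          (fun _ => ∑ q ∈ J, if h : (q : ℕ) < l then β ⟨q, h⟩ else δ) := by
    intro I J
    simp only [P, revProd_apply, dite_eq_ite]
  simp only [lhs, rhs, mul_assoc, ← mul_sum, ones]
  simp only [mul_smul_comm, ← smul_sum, mul_sum]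
  rw [sum_comm (s := (univ : Finset (Finset (Fin m))))]
  simp only [zeros, ← smul_sum]
  rw [sum_comm, smul_smul, ← Nat.cast_smul_eq_nsmul k, smul_smul, mul_comm (n - l).factorial,
    inv_mul_cancel₀, one_smul]
  exact_mod_cast mul_ne_zero (Nat.factorial_ne_zero _) (Nat.factorial_ne_zero _)
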